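/- For every integer n ≥ 2 and every cyclic permutation [φ] of {1,…,n}, the associated 3-hypergraph satisfies χ(H_[φ]) ≤ ω(H_[φ]) − 1. Consequently, every cyclic permutation 3-hypergraph H on at least two vertices satisfies χ(H) ≤ ω(H) − 1. -/

import Mathlib

open scoped Classical

/-- A `3`-hypergraph: a finite vertex set together with a finite set of edges,
each edge intended to be a 3-element subset of the vertex set. -/
structure ThreeHypergraph (α : Type*) where
  verts : Finset α
  edges : Finset (Finset α)

namespace ThreeHypergraph

variable {α : Type*}

/-- The structural requirements on a `3`-hypergraph: every edge is a
3-element subset of the vertex set. -/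
def IsValid (H : ThreeHypergraph α) : Prop :=
  ∀ e ∈ H.edges, e.card = 3 ∧ e ⊆ H.verts

/-- A proper colouring with `k` colours: a partition of the vertices into (at most)
`k` colour classes such that no edge is contained in a single class. -/
def ProperColoring (H : ThreeHypergraph α) (k : ℕ) : Prop :=
  ∃ c : α → ℕ, (∀ v ∈ H.verts, c v < k) ∧
    ∀ e ∈ H.edges, ¬ ∃ i : ℕ, ∀ v ∈ e, c v = i

/-- The chromatic number: the least `k` admitting a proper colouring. -/
noncomputable def chromaticNumber (H : ThreeHypergraph α) : ℕ :=
  sInf {k | H.ProperColoring k}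

/-- A clique: a set of vertices all of whose 3-element subsets are edges. -/
def IsClique (H : ThreeHypergraph α) (S : Finset α) : Prop :=
  S ⊆ H.verts ∧ ∀ t ⊆ S, t.card = 3 → t ∈ H.edges

/-- The clique number: the largest cardinality of a clique. -/
noncomputable def cliqueNumber (H : ThreeHypergraph α) : ℕ :=
  sSup {m | ∃ S : Finset α, H.IsClique S ∧ S.card = m}

end ThreeHypergraph

/-- `i < j < k` are in clockwise order with respect to the cyclic permutation `[φ]` of
`Fin n` if some representative `ψ` of the cyclic equivalence class of `φ` (i.e. some
cyclic shift of `φ`) satisfies `ψ⁻¹ i < ψ⁻¹ j < ψ⁻¹ k`. -/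
def Clockwise {n : ℕ} (φ : Equiv.Perm (Fin n)) (i j k : Fin n) : Prop :=
  ∃ m : Fin n, φ.symm i + m < φ.symm j + m ∧ φ.symm j + m < φ.symm k + m

/-- The `3`-hypergraph associated to a cyclic permutation `[φ]` of `{1, …, n}`
(encoded as `Fin n`): its edges are the triples `{i, j, k}` with `i < j < k` in
clockwise order with respect to `[φ]`. -/
noncomputable def cyclicPermHG (n : ℕ) (φ : Equiv.Perm (Fin n)) : ThreeHypergraph (Fin n) where
  verts := Finset.univ
  edges := (Finset.powersetCard 3 (Finset.univ : Finset (Fin n))).filter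
    (fun e => ∃ i j k : Fin n, i < j ∧ j < k ∧ Clockwise φ i j k ∧ e = {i, j, k})

/-- An isomorphism of 3-hypergraphs: a bijection of vertex sets carrying edges to
edges in both directions. -/
def HGIso {α β : Type*} [DecidableEq α] [DecidableEq β]
    (H : ThreeHypergraph α) (H' : ThreeHypergraph β) : Prop :=
  ∃ f : α → β, Set.InjOn f ↑H.verts ∧ H.verts.image f = H'.verts ∧
    ∀ e : Finset α, e ⊆ H.verts → (e ∈ H.edges ↔ e.image f ∈ H'.edges)

/-- A cyclic permutation 3-hypergraph: one isomorphic to `H_[φ]` for some cyclic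
permutation `[φ]`. -/
def IsCyclicPermHG {α : Type*} [DecidableEq α] (H : ThreeHypergraph α) : Prop :=
  H.IsValid ∧ ∃ (n : ℕ) (φ : Equiv.Perm (Fin n)), HGIso H (cyclicPermHG n φ)

namespace ThreeHypergraph

variable {α β : Type*}

lemma chromaticNumber_le {H : ThreeHypergraph α} {k : ℕ} (h : H.ProperColoring k) :
    H.chromaticNumber ≤ k :=
  Nat.sInf_le h

lemma IsClique.card_le {H : ThreeHypergraph α} {S : Finset α} (h : H.IsClique S) :
    S.card ≤ H.cliqueNumber := by
  refine le_csSup ⟨H.verts.card, ?_⟩ ⟨S, h, rfl⟩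
  rintro _ ⟨T, hT, rfl⟩
  exact Finset.card_le_card hT.1

lemma cliqueNumber_le {H : ThreeHypergraph α} {k : ℕ}
    (h : ∀ S, H.IsClique S → S.card ≤ k) : H.cliqueNumber ≤ k := by
  refine csSup_le ⟨0, ∅, ⟨by simp, fun t ht h3 => ?_⟩, rfl⟩ ?_
  · rw [Finset.subset_empty.mp ht] at h3
    simp at h3
  · rintro _ ⟨T, hT, rfl⟩
    exact h T hT

lemma ProperColoring.of_iso [DecidableEq α] [DecidableEq β] {H : ThreeHypergraph α}
    {H' : ThreeHypergraph β} (hH : H.IsValid) (h : HGIso H H') {k : ℕ}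
    (hk : H'.ProperColoring k) : H.ProperColoring k := by
  obtain ⟨f, -, him, hedge⟩ := h
  obtain ⟨c, hc, hc'⟩ := hk
  refine ⟨c ∘ f, fun v hv => hc _ (him ▸ Finset.mem_image_of_mem f hv), ?_⟩
  rintro e he ⟨i, hi⟩
  exact hc' _ ((hedge e (hH e he).2).mp he) ⟨i, by simpa using hi⟩

lemma cliqueNumber_le_of_iso [DecidableEq α] [DecidableEq β] {H : ThreeHypergraph α}
    {H' : ThreeHypergraph β} (h : HGIso H H') : H'.cliqueNumber ≤ H.cliqueNumber := by
  obtain ⟨f, hinj, him, hedge⟩ := h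
  refine cliqueNumber_le fun S hS => ?_
  obtain ⟨T, hT, rfl⟩ := Finset.subset_image_iff.mp (him ▸ hS.1)
  rw [Finset.card_image_of_injOn (hinj.mono hT)]
  refine IsClique.card_le ⟨hT, fun t ht h3 => ?_⟩
  have htv : t ⊆ H.verts := ht.trans hT
  refine (hedge t htv).mpr (hS.2 _ (Finset.image_subset_image ht) ?_)
  rwa [Finset.card_image_of_injOn (hinj.mono htv)]

end ThreeHypergraph

section CyclicPerm

variable {n : ℕ}

lemma Fin.lt_or_lt_and_lt_of_add_lt_add {x y z m : Fin n} (m' : Fin n)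
    (hxy : x + m < y + m) (hyz : y + m < z + m) :
    y + m' < z + m' ∨ (x + m' < y + m' ∧ z + m' < x + m') := by
  simp only [Fin.lt_def, Fin.val_add_eq_ite] at *
  split_ifs at * <;> omega

lemma Finset.exists_lt_lt_of_card_eq_three {α : Type*} [LinearOrder α] {t : Finset α}
    (ht : t.card = 3) : ∃ i j k, i < j ∧ j < k ∧ t = {i, j, k} := by
  let e := t.orderEmbOfFin ht
  refine ⟨e 0, e 1, e 2, by simp, by simp, ?_⟩
  ext x
  rw [← Finset.mem_coe, ← Finset.range_orderEmbOfFin t ht]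
  simp only [Set.mem_range, Fin.exists_fin_succ, e, Finset.mem_insert, Finset.mem_singleton]
  simp [eq_comm]

/-- The position of `v` in the representative of `[φ]` that starts with `0`. -/
def posFromZero [NeZero n] (φ : Equiv.Perm (Fin n)) (v : Fin n) : Fin n :=
  φ.symm v + -φ.symm 0

lemma posFromZero_zero [NeZero n] (φ : Equiv.Perm (Fin n)) : posFromZero φ 0 = 0 :=
  add_neg_cancel _

lemma posFromZero_injective [NeZero n] (φ : Equiv.Perm (Fin n)) :
    Function.Injective (posFromZero φ) :=
  (add_left_injective _).comp φ.symm.injective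

lemma isClique_of_strictMonoOn_posFromZero [NeZero n] {φ : Equiv.Perm (Fin n)}
    {S : Finset (Fin n)} (hS : StrictMonoOn (posFromZero φ) S) :
    (cyclicPermHG n φ).IsClique S := by
  refine ⟨Finset.subset_univ _, fun t ht h3 => ?_⟩
  obtain ⟨i, j, k, hij, hjk, rfl⟩ := Finset.exists_lt_lt_of_card_eq_three h3
  have hi : i ∈ S := ht (by simp)
  have hj : j ∈ S := ht (by simp)
  have hk : k ∈ S := ht (by simp)
  refine Finset.mem_filter.mpr ⟨Finset.mem_powersetCard.mpr ⟨Finset.subset_univ _, h3⟩,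
    i, j, k, hij, hjk, ⟨-φ.symm 0, hS hi hj hij, hS hj hk hjk⟩, ?_⟩
  ext x
  simp

/-- The sets containing `0` and `v`, with largest element `v`, that appear in increasing
order in the representative of `[φ]` that starts with `0`. -/
noncomputable def increasingSetsTo [NeZero n] (φ : Equiv.Perm (Fin n)) (v : Fin n) :
    Finset (Finset (Fin n)) :=
  {S | StrictMonoOn (posFromZero φ) S ∧ 0 ∈ S ∧ v ∈ S ∧ ∀ u ∈ S, u ≤ v}

lemma mem_increasingSetsTo [NeZero n] {φ : Equiv.Perm (Fin n)} {v : Fin n}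
    {S : Finset (Fin n)} : S ∈ increasingSetsTo φ v ↔
      StrictMonoOn (posFromZero φ) S ∧ 0 ∈ S ∧ v ∈ S ∧ ∀ u ∈ S, u ≤ v := by
  simp [increasingSetsTo]

lemma insert_mem_increasingSetsTo [NeZero n] {φ : Equiv.Perm (Fin n)} {v w : Fin n}
    {S : Finset (Fin n)} (hS : S ∈ increasingSetsTo φ v) (hvw : v < w)
    (hp : posFromZero φ v < posFromZero φ w) : insert w S ∈ increasingSetsTo φ w := by
  obtain ⟨hmono, h0, hv, hle⟩ := mem_increasingSetsTo.mp hS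
  refine mem_increasingSetsTo.mpr ⟨?_, by simp [h0], by simp, ?_⟩
  · intro a ha b hb hab
    simp only [Finset.coe_insert, Set.mem_insert_iff, Finset.mem_coe] at ha hb
    rcases ha with rfl | ha <;> rcases hb with rfl | hb
    · exact absurd hab (lt_irrefl _)
    · exact absurd (hab.trans_le (hle b hb)) hvw.not_gt
    · exact (hmono.monotoneOn ha hv (hle a ha)).trans_lt hp
    · exact hmono ha hb hab
  · intro u hu
    rcases Finset.mem_insert.mp hu with rfl | hu
    · exact le_rfl
    · exact (hle u hu).trans hvw.le

lemma increasingSetsTo_nonempty [NeZero n] (φ : Equiv.Perm (Fin n)) (v : Fin n) :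
    (increasingSetsTo φ v).Nonempty := by
  have h0 : ({0} : Finset (Fin n)) ∈ increasingSetsTo φ 0 :=
    mem_increasingSetsTo.mpr ⟨by simp, by simp, by simp, by simp⟩
  rcases eq_or_ne v 0 with rfl | hv
  · exact ⟨_, h0⟩
  · refine ⟨_, insert_mem_increasingSetsTo h0 (Fin.pos_iff_ne_zero.mpr hv) ?_⟩
    rw [posFromZero_zero, Fin.pos_iff_ne_zero, ← posFromZero_zero φ]
    exact (posFromZero_injective φ).ne hv

/-- The largest size of a set in `increasingSetsTo φ v`. -/
noncomputable def increasingRank [NeZero n] (φ : Equiv.Perm (Fin n)) (v : Fin n) : ℕ :=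
  (increasingSetsTo φ v).sup Finset.card

lemma exists_card_eq_increasingRank [NeZero n] (φ : Equiv.Perm (Fin n)) (v : Fin n) :
    ∃ S ∈ increasingSetsTo φ v, S.card = increasingRank φ v := by
  obtain ⟨S, hS, h⟩ :=
    Finset.exists_mem_eq_sup _ (increasingSetsTo_nonempty φ v) Finset.card
  exact ⟨S, hS, h.symm⟩

lemma increasingRank_le_cliqueNumber [NeZero n] (φ : Equiv.Perm (Fin n)) (v : Fin n) :
    increasingRank φ v ≤ (cyclicPermHG n φ).cliqueNumber := by
  obtain ⟨S, hS, h⟩ := exists_card_eq_increasingRank φ v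
  exact h ▸ (isClique_of_strictMonoOn_posFromZero (mem_increasingSetsTo.mp hS).1).card_le

lemma two_le_increasingRank [NeZero n] (φ : Equiv.Perm (Fin n)) {v : Fin n} (hv : v ≠ 0) :
    2 ≤ increasingRank φ v := by
  obtain ⟨S, hS, h⟩ := exists_card_eq_increasingRank φ v
  obtain ⟨-, h0, hvS, -⟩ := mem_increasingSetsTo.mp hS
  exact h ▸ Finset.one_lt_card.mpr ⟨v, hvS, 0, h0, hv⟩

lemma increasingRank_lt [NeZero n] {φ : Equiv.Perm (Fin n)} {v w : Fin n} (hvw : v < w)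
    (hp : posFromZero φ v < posFromZero φ w) : increasingRank φ v < increasingRank φ w := by
  obtain ⟨S, hS, h⟩ := exists_card_eq_increasingRank φ v
  have hw : w ∉ S := fun hw => ((mem_increasingSetsTo.mp hS).2.2.2 w hw).not_gt hvw
  have := Finset.le_sup (f := Finset.card) (insert_mem_increasingSetsTo hS hvw hp)
  rw [Finset.card_insert_of_notMem hw] at this
  exact h ▸ this

lemma properColoring_cyclicPermHG (hn : 2 ≤ n) (φ : Equiv.Perm (Fin n)) :
    (cyclicPermHG n φ).ProperColoring ((cyclicPermHG n φ).cliqueNumber - 1) := by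
  have : NeZero n := ⟨by omega⟩
  have hclique : 2 ≤ (cyclicPermHG n φ).cliqueNumber := by
    have h1 : (⟨1, hn⟩ : Fin n) ≠ 0 := by simp [Fin.ext_iff]
    exact (two_le_increasingRank φ h1).trans (increasingRank_le_cliqueNumber φ _)
  have hlt : ∀ v w, v ≠ 0 → v < w → posFromZero φ v < posFromZero φ w →
      increasingRank φ v - 2 < increasingRank φ w - 2 := fun v w hv hvw hp => by
    have := two_le_increasingRank φ hv
    have := increasingRank_lt hvw hp
    omega
  refine ⟨fun v => increasingRank φ v - 2, fun v _ => ?_, ?_⟩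
  · have := increasingRank_le_cliqueNumber φ v
    dsimp only
    omega
  · rintro e he ⟨r, hr⟩
    obtain ⟨-, i, j, k, hij, hjk, ⟨m, hm, hm'⟩, rfl⟩ := Finset.mem_filter.mp he
    have hi := hr i (by simp)
    have hj := hr j (by simp)
    have hk := hr k (by simp)
    dsimp only at hi hj hk
    rcases Fin.lt_or_lt_and_lt_of_add_lt_add (-φ.symm 0) hm hm' with h | ⟨h, h'⟩
    · have := hlt j k ((Fin.zero_le i).trans_lt hij).ne' hjk h
      omega
    · have hi0 : i ≠ 0 := by
        rintro rfl
        rw [add_neg_cancel] at h'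
        exact (Fin.zero_le _).not_gt h'
      have := hlt i j hi0 hij h
      omega

end CyclicPerm

/-- For every `n ≥ 2` and cyclic permutation `[φ]` of `{1, …, n}`,
`χ(H_[φ]) ≤ ω(H_[φ]) − 1`; consequently every cyclic permutation 3-hypergraph on at
least two vertices satisfies `χ(H) ≤ ω(H) − 1`. -/
theorem cyclicPermHG_chromatic_le {α : Type*} [DecidableEq α] :
    (∀ (n : ℕ), 2 ≤ n → ∀ φ : Equiv.Perm (Fin n),
      (cyclicPermHG n φ).chromaticNumber ≤ (cyclicPermHG n φ).cliqueNumber - 1) ∧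
    (∀ H : ThreeHypergraph α, IsCyclicPermHG H → 2 ≤ H.verts.card →
      H.chromaticNumber ≤ H.cliqueNumber - 1) := by
  refine ⟨fun n hn φ =>
    ThreeHypergraph.chromaticNumber_le (properColoring_cyclicPermHG hn φ), ?_⟩
  rintro H ⟨hH, n, φ, hiso⟩ hcard
  have hn : 2 ≤ n := by
    obtain ⟨f, hinj, him, -⟩ := hiso
    rw [← Finset.card_image_of_injOn hinj, him] at hcard
    simpa [cyclicPermHG] using hcard
  exact (ThreeHypergraph.chromaticNumber_le
    (.of_iso hH hiso (properColoring_cyclicPermHG hn φ))).trans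
      (Nat.sub_le_sub_right (ThreeHypergraph.cliqueNumber_le_of_iso hiso) 1)
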